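/- Let p, q ≥ 1 and let ι : ℂ^{p+q} → ℓ²(ℕ, ℂ) be a ℂ-linear map satisfying Q_{p,∞}(ι(x), ι(y)) = Q_{p,q}(x, y) for all x, y ∈ ℂ^{p+q} (an embedding of 𝒳(p,q) into 𝒳(p,∞)). Then there exists a continuous ℂ-linear automorphism g of ℓ²(ℕ, ℂ) with continuous inverse such that Q_{p,∞}(g(u), g(v)) = Q_{p,∞}(u, v) for all u, v ∈ ℓ²(ℕ, ℂ) and g(ι(x)) = ι₀(x) for all x ∈ ℂ^{p+q}. In other words, every embedding of 𝒳(p,q) into 𝒳(p,∞) is obtained from the standard embedding by composing with an element of U(p,∞). -/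

import Mathlib

/-- The Hermitian form of signature `(p, ∞)` on `ℓ²(ℕ, ℂ)`. -/
noncomputable def QpInf (p : ℕ) (x y : lp (fun _ : ℕ => ℂ) 2) : ℂ :=
  ∑' i : ℕ, (if i < p then (1 : ℂ) else -1) * x i * (starRingEnd ℂ) (y i)

/-- The Hermitian form of signature `(p, q)` on `ℂ^{p+q}`. -/
noncomputable def Qpq (p q : ℕ) (x y : Fin (p + q) → ℂ) : ℂ :=
  ∑ i : Fin (p + q), (if i.1 < p then (1 : ℂ) else -1) * x i * (starRingEnd ℂ) (y i)

/-- The standard embedding `ι₀ : ℂ^{p+q} → ℓ²(ℕ, ℂ)`, sending the basis vector `E_i`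
to the basis vector `e_i` for `i = 0, …, p+q−1`. -/
noncomputable def stdEmb (p q : ℕ) (x : Fin (p + q) → ℂ) : lp (fun _ : ℕ => ℂ) 2 :=
  ∑ i : Fin (p + q), lp.single 2 (i : ℕ) (x i)

section helpers

open ComplexConjugate

variable {E : Type*} [NormedAddCommGroup E] [NormedSpace ℂ E]

/-- Unitary quasi-reflections along `w`. -/
lemma aux_refl (φ : E → E →L[ℂ] ℂ) (hφ : ∀ x y, φ y x = conj (φ x y)) (a : ℂ) (w : E)
    (h : a + conj a = a * conj a * φ w w) :
    ∃ g : E ≃L[ℂ] E, (∀ u v, φ (g v) (g u) = φ v u) ∧ ∀ x, g x = x - (a * φ w x) • w := by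
  let T : ℂ → E →L[ℂ] E := fun b =>
    ContinuousLinearMap.id ℂ E - b • (φ w).smulRight w
  have hT : ∀ b x, T b x = x - (b * φ w x) • w := by
    intro b x
    simp [T, smul_smul]
  have hinv : ∀ b c x, b + c = b * c * φ w w → T b (T c x) = x := by
    intro b c x hbc
    have h1 : T b (T c x) = x - ((b + c - b * c * φ w w) * φ w x) • w := by
      simp only [hT, map_sub, map_smul, smul_eq_mul]
      module
    rw [h1, hbc]; simp
  have hww : conj (φ w w) = φ w w := (hφ w w).symm
  refine ⟨ContinuousLinearEquiv.equivOfInverse (T a) (T (conj a))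
    (fun x => hinv _ _ x (by rw [add_comm, h]; ring)) (fun x => hinv _ _ x h), ?_, ?_⟩
  · intro u v
    have key : ∀ z, φ (T a v) z = φ v z - conj a * conj (φ w v) * φ w z := by
      intro z
      rw [hφ z (T a v), hT, map_sub, map_smul, map_sub, smul_eq_mul, map_mul, map_mul,
        ← hφ z v, ← hφ z w]
    simp only [ContinuousLinearEquiv.equivOfInverse_apply]
    rw [key, hT]
    simp only [map_sub, map_smul, smul_eq_mul]
    rw [hφ w v]
    linear_combination (-(φ w u) * conj (φ w v)) * h
  · intro x
    simp only [ContinuousLinearEquiv.equivOfInverse_apply]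
    exact hT a x

lemma aux_move0 (φ : E → E →L[ℂ] ℂ) (hφ : ∀ x y, φ y x = conj (φ x y)) (v e : E)
    (hve : φ v v = φ e e) (hne : φ e v ≠ φ v v) :
    ∃ g : E ≃L[ℂ] E, (∀ u v, φ (g v) (g u) = φ v u) ∧ g v = e ∧
      ∀ x, φ v x = 0 → φ e x = 0 → g x = x := by
  have key : ∀ z, φ (v - e) z = φ v z - φ e z := by
    intro z
    rw [hφ z (v - e), map_sub, map_sub, ← hφ, ← hφ]
  have hd : φ v v - φ e v ≠ 0 := fun h => hne (sub_eq_zero.1 h).symm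
  have hd2 : φ v v - φ v e ≠ 0 := by
    intro h
    apply hd
    have := congrArg conj h
    rwa [map_sub, ← hφ, ← hφ, map_zero] at this
  obtain ⟨g, hg, hgx⟩ := aux_refl φ hφ (φ v v - φ e v)⁻¹ (v - e) (by
    rw [map_inv₀, map_sub, ← hφ, ← hφ, key, map_sub, map_sub, ← hve]
    field_simp
    ring)
  refine ⟨g, hg, ?_, ?_⟩
  · rw [hgx, key, inv_mul_cancel₀ hd]; simp
  · intro x h1 h2
    rw [hgx, key, h1, h2]; simp

lemma aux_move (φ : E → E →L[ℂ] ℂ) (hφ : ∀ x y, φ y x = conj (φ x y)) (v e : E)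
    (hve : φ v v = φ e e) (h0 : φ e e ≠ 0) :
    ∃ g : E ≃L[ℂ] E, (∀ u v, φ (g v) (g u) = φ v u) ∧ g v = e ∧
      ∀ x, φ v x = 0 → φ e x = 0 → g x = x := by
  by_cases hne : φ e v = φ v v
  · have hneg : ∀ z, φ (-e) z = - φ e z := by
      intro z
      rw [hφ z (-e), map_neg, map_neg, ← hφ]
    have hn2 : φ e e ≠ - φ e e := fun h => h0 (self_eq_neg.1 h)
    obtain ⟨g, hg, hgv, hgx⟩ := aux_move0 φ hφ v (-e) (by rw [hneg, map_neg, neg_neg, hve])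
      (by rw [hneg, hne, hve]; exact hn2.symm)
    obtain ⟨k, hk, hkv, hkx⟩ := aux_move0 φ hφ (-e) e (by rw [hneg, map_neg, neg_neg])
      (by rw [hneg, map_neg, neg_neg]; exact hn2.symm)
    refine ⟨g.trans k, ?_, ?_, ?_⟩
    · intro u v; simp [hk, hg]
    · simp [hgv, hkv]
    · intro x h1 h2
      have h3 : φ (-e) x = 0 := by rw [hneg, h2, neg_zero]
      simp [hgx x h1 h3, hkx x h3 h2]
  · exact aux_move0 φ hφ v e hve hne

lemma aux_ind (φ : E → E →L[ℂ] ℂ) (hφ : ∀ x y, φ y x = conj (φ x y)) (n : ℕ) (v e : Fin n → E)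
    (hve : ∀ i j, φ (v i) (v j) = φ (e i) (e j)) (h0 : ∀ i, φ (e i) (e i) ≠ 0)
    (ho : ∀ i j, i ≠ j → φ (e i) (e j) = 0) (k : ℕ) :
    ∃ g : E ≃L[ℂ] E, (∀ u v, φ (g v) (g u) = φ v u) ∧ ∀ i : Fin n, i.1 < k → g (v i) = e i := by
  induction k with
  | zero => exact ⟨ContinuousLinearEquiv.refl ℂ E, by simp, by simp⟩
  | succ k ih =>
    obtain ⟨g, hg, hgv⟩ := ih
    by_cases hk : k < n
    · obtain ⟨r, hr, hrv, hrx⟩ := aux_move φ hφ (g (v ⟨k, hk⟩)) (e ⟨k, hk⟩)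
        (by rw [hg, hve]) (h0 _)
      refine ⟨g.trans r, ?_, ?_⟩
      · intro u v; simp [hg, hr]
      · intro i hi
        rcases Nat.lt_succ_iff_lt_or_eq.1 hi with h | h
        · have hik : (⟨k, hk⟩ : Fin n) ≠ i := by
            intro h'; rw [← h'] at h; simp at h
          have : r (e i) = e i := by
            apply hrx
            · rw [← hgv i h, hg, hve, ho _ _ hik]
            · exact ho _ _ hik
          simp [hgv i h, this]
        · have : i = ⟨k, hk⟩ := Fin.ext h
          subst this
          simpa using hrv
    · exact ⟨g, hg, fun i _ => hgv i (by omega)⟩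

lemma QpInf_eq (p : ℕ) (x y : lp (fun _ : ℕ => ℂ) 2) :
    QpInf p x y = 2 * ∑ i ∈ Finset.range p, conj (y i) * x i - inner ℂ y x := by
  have h1 : HasSum (fun i => conj (y i) * x i) (inner ℂ y x) := by
    have := lp.hasSum_inner (𝕜 := ℂ) y x
    simpa [mul_comm] using this
  have h2 : HasSum (fun i => if i < p then 2 * (conj (y i) * x i) else 0)
      (∑ i ∈ Finset.range p, (if i < p then 2 * (conj (y i) * x i) else 0)) :=
    hasSum_sum_of_ne_finset_zero (by intro b hb; simp at hb; simp [hb])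
  have h3 := (h2.sub h1).tsum_eq
  rw [QpInf, Finset.mul_sum]
  rw [Finset.sum_congr rfl (g := fun i => 2 * (conj (y i) * x i))
    (by intro i hi; simp at hi; simp [hi])] at h3
  rw [← h3]
  congr 1
  ext i
  split_ifs <;> ring

/-- The form as a family of continuous functionals. -/
noncomputable def auxPhi (p : ℕ) (y : lp (fun _ : ℕ => ℂ) 2) : lp (fun _ : ℕ => ℂ) 2 →L[ℂ] ℂ :=
  (2 : ℂ) • ∑ i ∈ Finset.range p, conj (y i) • lp.evalCLM ℂ (fun _ : ℕ => ℂ) 2 i - innerSL ℂ y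

lemma auxPhi_apply (p : ℕ) (x y : lp (fun _ : ℕ => ℂ) 2) : auxPhi p y x = QpInf p x y := by
  rw [QpInf_eq]
  simp [auxPhi, lp.evalCLM]

lemma auxPhi_herm (p : ℕ) (x y : lp (fun _ : ℕ => ℂ) 2) :
    auxPhi p y x = conj (auxPhi p x y) := by
  rw [auxPhi_apply, auxPhi_apply, QpInf_eq, QpInf_eq]
  have h2 : conj (2 : ℂ) = 2 := Complex.conj_ofNat 2
  simp [map_sum, mul_comm, h2]

lemma QpInf_single (p i j : ℕ) :
    QpInf p (lp.single 2 i (1 : ℂ)) (lp.single 2 j (1 : ℂ)) =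
      if i = j then (if i < p then 1 else -1) else 0 := by
  rw [QpInf, tsum_eq_single i]
  · by_cases h : i = j
    · subst h; simp
    · simp [h, Pi.single_apply]
  · intro k hk; simp [hk, Pi.single_apply]

lemma Qpq_single (p q : ℕ) (i j : Fin (p + q)) :
    Qpq p q (Pi.single i (1 : ℂ)) (Pi.single j (1 : ℂ)) =
      if i = j then (if i.1 < p then 1 else -1) else 0 := by
  rw [Qpq, Finset.sum_eq_single i]
  · by_cases h : i = j
    · subst h; simp
    · simp [h, Pi.single_apply]
  · intro k _ hk; simp [hk, Pi.single_apply]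
  · simp

end helpers

theorem stmt1 (p q : ℕ) (hp : 1 ≤ p) (hq : 1 ≤ q)
    (ι : (Fin (p + q) → ℂ) →ₗ[ℂ] lp (fun _ : ℕ => ℂ) 2)
    (hι : ∀ x y, QpInf p (ι x) (ι y) = Qpq p q x y) :
    ∃ g : lp (fun _ : ℕ => ℂ) 2 ≃L[ℂ] lp (fun _ : ℕ => ℂ) 2,
      (∀ u v, QpInf p (g u) (g v) = QpInf p u v) ∧
      (∀ x, g (ι x) = stdEmb p q x) := by
  obtain ⟨g, hg, hgv⟩ := aux_ind (auxPhi p) (auxPhi_herm p) (p + q)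
    (fun i => ι (Pi.single i 1)) (fun i => lp.single 2 (i : ℕ) (1 : ℂ))
    (by
      intro i j
      simp only [auxPhi_apply, hι, Qpq_single, QpInf_single, Fin.ext_iff])
    (by
      intro i
      simp only [auxPhi_apply, QpInf_single, if_true]
      split_ifs <;> simp)
    (by
      intro i j hij
      simp only [auxPhi_apply, QpInf_single]
      rw [if_neg]
      intro h
      exact hij (Fin.ext h.symm))
    (p + q)
  refine ⟨g, ?_, ?_⟩
  · intro u v
    rw [← auxPhi_apply, ← auxPhi_apply, hg]
  · intro x
    have hx : x = ∑ i, x i • (Pi.single i (1 : ℂ) : Fin (p + q) → ℂ) := by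
      exact pi_eq_sum_univ' x
    conv_lhs => rw [hx]
    rw [map_sum, map_sum, stdEmb]
    refine Finset.sum_congr rfl fun i _ => ?_
    rw [map_smul, map_smul, hgv i i.2, ← lp.single_smul]
    simp
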